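/- For all finite graphs G and H, γ_{k}(G) · γ_{k}(H) ≤ 2k · γ_{k}(G □ H). -/

import Mathlib

/-!
The argument is a symmetric version of the Clark–Suen double count.

Let `u₁, …, uₙ` and `v₁, …, vₘ` list minimum `{k}`-dominating multisets of `G` and `H`. For each
vertex `g` choose `k` distinct indices `σ g s` (`s < k`) with `u (σ g s) ∈ N[g]`, and likewise
`τ h t` for `h`. Let `D` be a minimum `{k}`-dominating multiset of `G □ H`. At `(g, h)`, let `a` be
the number of elements of `D` in `N[g] × {h}` and `b` the number in `{g} × N[h]`, so `k ≤ a + b`.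
Put on `Fin k × Fin k` the circulant relation `R g h s t : s + t < a` (addition modulo `k`); it has
at most `a` true entries in each column and at most `k - a ≤ b` false entries in each row.

For a pair `(i, j)`, consider the 0/1 matrix with rows the `(g, s)` with `σ g s = i`, columns the
`(h, t)` with `τ h t = j`, and entries `R g h s t`. Either every row contains a true entry, or some
row is entirely false and so every column contains a false entry. For fixed `j`, the indices `i` of
the first kind can be removed from `u` and replaced by the projection to `G` of the part of `D`
lying over the columns of `j`, without losing `{k}`-domination (`card_le_of_replace`). By
minimality of `n`, there are at most as many such `i` as elements in that part
(`card_rowType_le`). Each element of `D` lies over exactly `k` columns, so at most `k |D|` pairs are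
of the first kind; symmetrically at most `k |D|` are of the second, and there are `n m` pairs.
-/

open scoped Classical

noncomputable def domCount {V : Type*} (G : SimpleGraph V) (A : Multiset V) (v : V) : ℕ :=
  Multiset.countP (fun a => a = v ∨ G.Adj v a) A

/-- `A` dominates `B`: for every vertex `b`, the number of elements of `A` in the closed
neighborhood of `b` (with multiplicity) is at least the multiplicity of `b` in `B`. -/
def Dominates {V : Type*} (G : SimpleGraph V) (A B : Multiset V) : Prop :=
  ∀ b, B.count b ≤ domCount G A b

/-- `A` is a `{k}`-dominating multiset of `G`. -/
def KDominating {V : Type*} (G : SimpleGraph V) (k : ℕ) (A : Multiset V) : Prop :=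
  ∀ v, k ≤ domCount G A v

/-- the `{k}`-domination number `γ_{k}(G)`. -/
noncomputable def gammaK {V : Type*} (G : SimpleGraph V) (k : ℕ) : ℕ :=
  sInf {n | ∃ D : Multiset V, KDominating G k D ∧ Multiset.card D = n}

/-- `S` is a dominating set of `G`. -/
def IsDomSet {V : Type*} (G : SimpleGraph V) (S : Finset V) : Prop :=
  ∀ v, ∃ d ∈ S, d = v ∨ G.Adj v d

/-- the domination number `γ(G)`. -/
noncomputable def gamma {V : Type*} (G : SimpleGraph V) : ℕ :=
  sInf {n | ∃ S : Finset V, IsDomSet G S ∧ S.card = n}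

/-- the Ψ-projection of a multiset on `V(G) × V(H)` onto `V(H)`: multiplicity at `h` is the
sum over `g` of the multiplicity of `(g,h)`. -/
def psiH {α β : Type*} (A : Multiset (α × β)) : Multiset β := A.map Prod.snd

/-- `a` lies in the closed neighborhood of `v`. -/
def ClosedNbr {V : Type*} (G : SimpleGraph V) (v a : V) : Prop := a = v ∨ G.Adj v a

lemma domCount_map {V Y : Type*} [Fintype Y] (G : SimpleGraph V) (w : Y → V) (v : V) :
    domCount G ((Finset.univ : Finset Y).val.map w) v
      = (Finset.univ.filter fun y => ClosedNbr G v (w y)).card := by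
  unfold domCount
  rw [Multiset.countP_map, ← Finset.filter_val, Finset.card_val]
  exact congrArg _ (Finset.filter_congr fun _ _ => Iff.rfl)

lemma exists_family {V : Type*} (D : Multiset V) :
    ∃ w : Fin (Multiset.card D) → V, (Finset.univ : Finset (Fin _)).val.map w = D := by
  obtain ⟨l, rfl⟩ : ∃ l : List V, D = l := ⟨D.toList, D.coe_toList.symm⟩
  rw [Multiset.coe_card]
  exact ⟨l.get, by rw [Fin.univ_val_map, List.ofFn_get]⟩

/-- The infimum defining `γ_{k}` is attained, by a finite family of vertices. -/
lemma exists_min_family {V : Type*} [Fintype V] (G : SimpleGraph V) (k : ℕ) :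
    ∃ w : Fin (gammaK G k) → V,
      ∀ v, k ≤ (Finset.univ.filter fun y => ClosedNbr G v (w y)).card := by
  have hne : {n | ∃ D : Multiset V, KDominating G k D ∧ Multiset.card D = n}.Nonempty := by
    refine ⟨_, (Finset.univ : Finset (V × Fin k)).val.map Prod.fst, fun v => ?_, rfl⟩
    rw [domCount_map]
    calc k = (Finset.univ.image fun s : Fin k => (v, s)).card := by
          rw [Finset.card_image_of_injective _ (Prod.mk_right_injective v)]; simp
      _ ≤ _ := by
          apply Finset.card_le_card
          intro x hx
          obtain ⟨s, -, rfl⟩ := Finset.mem_image.1 hx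
          exact Finset.mem_filter.2 ⟨Finset.mem_univ _, Or.inl rfl⟩
  obtain ⟨D, hD, hc⟩ := Nat.sInf_mem hne
  change _ = gammaK G k at hc
  rw [← hc]
  obtain ⟨w, hw⟩ := exists_family D
  refine ⟨w, fun v => ?_⟩
  rw [← domCount_map, hw]
  exact hD v

lemma gammaK_le_card {V Y : Type*} [Fintype Y] (G : SimpleGraph V) (k : ℕ) (w : Y → V)
    (h : ∀ v, k ≤ (Finset.univ.filter fun y => ClosedNbr G v (w y)).card) :
    gammaK G k ≤ Fintype.card Y := by
  refine Nat.sInf_le ⟨(Finset.univ : Finset Y).val.map w, fun v => ?_, by simp⟩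
  rw [domCount_map]
  exact h v

lemma exists_choice {V Y : Type*} [Fintype Y] (G : SimpleGraph V) (k : ℕ) (w : Y → V)
    (h : ∀ v, k ≤ (Finset.univ.filter fun y => ClosedNbr G v (w y)).card) :
    ∃ σ : V → Fin k → Y, (∀ v, Function.Injective (σ v)) ∧ ∀ v s, ClosedNbr G v (w (σ v s)) := by
  have key : ∀ v, ∃ e : Fin k → Y, Function.Injective e ∧ ∀ s, ClosedNbr G v (w (e s)) := by
    intro v
    obtain ⟨t, hts, htc⟩ := Finset.exists_subset_card_eq (h v)
    refine ⟨fun s => (t.equivFinOfCardEq htc).symm s,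
      Subtype.val_injective.comp (Equiv.injective _), fun s => ?_⟩
    exact (Finset.mem_filter.1 (hts ((t.equivFinOfCardEq htc).symm s).2)).2
  choose σ h1 h2 using key
  exact ⟨σ, h1, h2⟩

/-- If the members of a minimum `{k}`-dominating family indexed by `I` can be replaced by the family
`z` without losing `{k}`-domination, then `z` has at least `|I|` members. -/
lemma card_le_of_replace {V Y : Type*} [Fintype Y] (G : SimpleGraph V) (k : ℕ)
    (u : Fin (gammaK G k) → V) (σ : V → Fin k → Fin (gammaK G k))
    (hσ : ∀ v, Function.Injective (σ v)) (hu : ∀ v s, ClosedNbr G v (u (σ v s)))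
    (I : Finset (Fin (gammaK G k))) (z : Y → V)
    (hz : ∀ v, (Finset.univ.filter fun s => σ v s ∈ I).card
      ≤ (Finset.univ.filter fun y => ClosedNbr G v (z y)).card) :
    I.card ≤ Fintype.card Y := by
  have h := gammaK_le_card G k (Y := {i // i ∉ I} ⊕ Y) (Sum.elim (fun i => u i) z) (fun v => by
    have h1 : (Finset.univ.filter fun s => σ v s ∉ I).card
        ≤ (Finset.univ.filter fun i : {i // i ∉ I} => ClosedNbr G v (u i)).card := by
      rw [← Fintype.card_subtype, ← Fintype.card_subtype]
      refine Fintype.card_le_of_injective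
        (fun s => ⟨⟨σ v s.1, s.2⟩, hu v s.1⟩) (fun s s' hs => ?_)
      simp only [Subtype.mk.injEq] at hs
      exact Subtype.ext (hσ v hs)
    have h2 := Finset.card_filter_add_card_filter_not
      (s := (Finset.univ : Finset (Fin k))) (fun s => σ v s ∈ I)
    rw [Finset.card_univ, Fintype.card_fin] at h2
    have h3 : (Finset.univ.filter fun y : {i // i ∉ I} ⊕ Y =>
        ClosedNbr G v (Sum.elim (fun i : {i // i ∉ I} => u i) z y)).card
        = (Finset.univ.filter fun i : {i // i ∉ I} => ClosedNbr G v (u i)).card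
          + (Finset.univ.filter fun y => ClosedNbr G v (z y)).card := by
      rw [← Fintype.card_subtype, ← Fintype.card_subtype, ← Fintype.card_subtype,
        ← Fintype.card_sum]
      exact Fintype.card_congr Equiv.subtypeSum
    have := hz v
    omega)
  have h4 : Fintype.card {i // i ∉ I} = gammaK G k - I.card := by
    rw [Fintype.card_subtype_compl (fun i => i ∈ I)]; simp
  have h5 : I.card ≤ gammaK G k := by simpa using I.card_le_univ
  rw [Fintype.card_sum, h4] at h
  omega

/-- For a fixed column class `j`, the indices `i` whose rows all contain a true entry of `R` are at
most as many as the elements of `D` (indexed by `X`, with coordinates `p`, `q`) over `j`, an element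
being counted once for each column of class `j` over which it lies. -/
lemma card_rowType_le {α β X : Type*} [Fintype β] [Fintype X] (G : SimpleGraph α) (k m : ℕ)
    (u : Fin (gammaK G k) → α) (σ : α → Fin k → Fin (gammaK G k))
    (hσ : ∀ v, Function.Injective (σ v)) (hu : ∀ v s, ClosedNbr G v (u (σ v s)))
    (τ : β → Fin k → Fin m) (p : X → α) (q : X → β) (R : α → β → Fin k → Fin k → Prop)
    (hR : ∀ g h t, (Finset.univ.filter fun s => R g h s t).card
      ≤ (Finset.univ.filter fun x => q x = h ∧ ClosedNbr G g (p x)).card) (j : Fin m) :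
    (Finset.univ.filter fun i => ∀ g s, σ g s = i → ∃ h t, τ h t = j ∧ R g h s t).card
      ≤ (Finset.univ.filter fun y : X × Fin k => τ (q y.1) y.2 = j).card := by
  rw [← Fintype.card_subtype (fun y : X × Fin k => τ (q y.1) y.2 = j)]
  refine card_le_of_replace G k u σ hσ hu _ (fun y => p y.1.1) (fun g => ?_)
  let C : Finset (β × Fin k) := Finset.univ.filter fun c => τ c.1 c.2 = j
  calc _ ≤ (C.biUnion fun c => Finset.univ.filter fun s => R g c.1 s c.2).card := by
        apply Finset.card_le_card
        intro s hs
        simp only [Finset.mem_filter, Finset.mem_univ, true_and] at hs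
        obtain ⟨h, t, h1, h2⟩ := hs g s rfl
        simp only [C, Finset.mem_biUnion, Finset.mem_filter, Finset.mem_univ, true_and]
        exact ⟨(h, t), h1, h2⟩
    _ ≤ ∑ c ∈ C, (Finset.univ.filter fun s => R g c.1 s c.2).card := Finset.card_biUnion_le
    _ ≤ ∑ c ∈ C, (Finset.univ.filter fun y : {y : X × Fin k // τ (q y.1) y.2 = j} =>
          ClosedNbr G g (p y.1.1) ∧ (q y.1.1, y.1.2) = c).card := by
        refine Finset.sum_le_sum fun c hc => (hR g c.1 c.2).trans ?_
        have hc' : τ c.1 c.2 = j := (Finset.mem_filter.1 hc).2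
        rw [← Fintype.card_subtype, ← Fintype.card_subtype]
        refine Fintype.card_le_of_injective
          (fun x => ⟨⟨(x.1, c.2), by rw [x.2.1]; exact hc'⟩, x.2.2, Prod.ext x.2.1 rfl⟩)
          (fun x x' hx => ?_)
        simp only [Subtype.mk.injEq, Prod.mk.injEq, and_true] at hx
        exact Subtype.ext hx
    _ = _ := by
        rw [Finset.card_eq_sum_card_fiberwise (t := C)
          (f := fun y : {y : X × Fin k // τ (q y.1) y.2 = j} => (q y.1.1, y.1.2))
          (fun y _ => by simpa [C] using y.2)]
        simp only [Finset.filter_filter]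

/-- Summing over all column classes counts each element of `D` exactly `k` times. -/
lemma sum_card_fiber {β X : Type*} [Fintype X] (k m : ℕ) (τ : β → Fin k → Fin m) (q : X → β) :
    ∑ j, (Finset.univ.filter fun y : X × Fin k => τ (q y.1) y.2 = j).card
      = Fintype.card X * k := by
  rw [← Finset.card_eq_sum_card_fiberwise (fun _ _ => Finset.mem_coe.2 (Finset.mem_univ _))]
  simp

lemma card_circulant_lt (k a : ℕ) [NeZero k] (t : Fin k) :
    (Finset.univ.filter fun s : Fin k => (s + t).val < a).card ≤ a := by
  calc _ ≤ (Finset.range a).card :=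
        Finset.card_le_card_of_injOn (fun s => (s + t).val)
          (fun s hs => by simpa using hs)
          (fun s _ s' _ h => add_right_cancel (Fin.ext h))
    _ = a := Finset.card_range a

lemma card_circulant_ge (k a : ℕ) [NeZero k] (s : Fin k) :
    (Finset.univ.filter fun t : Fin k => ¬ (s + t).val < a).card ≤ k - a := by
  calc _ ≤ (Finset.Ico a k).card :=
        Finset.card_le_card_of_injOn (fun t => (s + t).val)
          (fun t ht => by
            simp only [Finset.coe_filter, Finset.mem_univ, true_and, Set.mem_ofPred_eq] at ht
            simpa using ht)
          (fun t _ t' _ h => add_left_cancel (Fin.ext h))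
    _ = k - a := Nat.card_Ico a k

theorem stmt6 {α β : Type*} [Fintype α] [Fintype β]
    (G : SimpleGraph α) (H : SimpleGraph β) (k : ℕ) (hk : 1 ≤ k) :
    gammaK G k * gammaK H k ≤ 2 * k * gammaK (G.boxProd H) k := by
  have : NeZero k := ⟨by omega⟩
  obtain ⟨u, hu⟩ := exists_min_family G k
  obtain ⟨v, hv⟩ := exists_min_family H k
  obtain ⟨w, hw⟩ := exists_min_family (G.boxProd H) k
  obtain ⟨σ, hσ, hσu⟩ := exists_choice G k u hu
  obtain ⟨τ, hτ, hτv⟩ := exists_choice H k v hv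
  let a : α → β → ℕ := fun g h =>
    (Finset.univ.filter fun x => (w x).2 = h ∧ ClosedNbr G g (w x).1).card
  let b : α → β → ℕ := fun g h =>
    (Finset.univ.filter fun x => (w x).1 = g ∧ ClosedNbr H h (w x).2).card
  have hab : ∀ g h, k ≤ a g h + b g h := by
    intro g h
    refine (hw (g, h)).trans (le_trans (Finset.card_le_card ?_) (Finset.card_union_le _ _))
    intro x hx
    simp only [Finset.mem_filter, Finset.mem_univ, true_and, Finset.mem_union] at hx ⊢
    simp only [ClosedNbr, SimpleGraph.boxProd_adj, Prod.ext_iff] at hx ⊢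
    rcases hx with ⟨h1, h2⟩ | ⟨h1, h2⟩ | ⟨h1, h2⟩
    · exact Or.inl ⟨h2, Or.inl h1⟩
    · exact Or.inl ⟨h2.symm, Or.inr h1⟩
    · exact Or.inr ⟨h2.symm, Or.inr h1⟩
  let R : α → β → Fin k → Fin k → Prop := fun g h s t => (s + t).val < a g h
  have hrow := fun j => card_rowType_le G k _ u σ hσ hσu τ (fun x => (w x).1) (fun x => (w x).2) R
    (fun g h t => by convert card_circulant_lt k (a g h) t) j
  have hcol := fun i => card_rowType_le H k _ v τ hτ hτv σ (fun x => (w x).2) (fun x => (w x).1)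
    (fun h g t s => ¬ R g h s t)
    (fun h g s => by
      have h1 := card_circulant_ge k (a g h) s
      have h2 : k - a g h ≤ b g h := Nat.sub_le_iff_le_add'.2 (hab g h)
      exact le_trans (le_of_eq (by congr!)) (h1.trans h2)) i
  have hrow' := Finset.sum_le_sum fun j (_ : j ∈ Finset.univ) => hrow j
  have hcol' := Finset.sum_le_sum fun i (_ : i ∈ Finset.univ) => hcol i
  rw [sum_card_fiber k _ τ (fun x => (w x).2), Fintype.card_fin] at hrow'
  rw [sum_card_fiber k _ σ (fun x => (w x).1), Fintype.card_fin] at hcol'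
  -- Swap the order of counting, so that both sums run over all pairs `(i, j)`.
  simp only [Finset.card_filter] at hrow' hcol'
  rw [Finset.sum_comm] at hrow'
  have hall : gammaK G k * gammaK H k = ∑ i : Fin (gammaK G k), ∑ j : Fin (gammaK H k), 1 := by
    simp
  have hsum : gammaK G k * gammaK H k
      ≤ gammaK (G.boxProd H) k * k + gammaK (G.boxProd H) k * k := by
    refine le_trans ?_ (Nat.add_le_add hrow' hcol')
    rw [hall, ← Finset.sum_add_distrib]
    refine Finset.sum_le_sum fun i _ => ?_
    rw [← Finset.sum_add_distrib]
    refine Finset.sum_le_sum fun j _ => ?_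
    by_cases h1 : ∀ g s, σ g s = i → ∃ h t, τ h t = j ∧ R g h s t
    · rw [if_pos h1]; omega
    · have h2 : ∀ h t, τ h t = j → ∃ g s, σ g s = i ∧ ¬ R g h s t := by
        push Not at h1
        obtain ⟨g, s, hi, hRn⟩ := h1
        exact fun h t hj => ⟨g, s, hi, hRn h t hj⟩
      rw [if_pos h2]; omega
  linarith
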